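/- Fix k ≥ 1. The average of H(A) over all A ∈ L_n^k, multiplied by n^{-k/(k+1)}, has liminf at least k^{k/(k+1)}/(k+1) as n → ∞; i.e., liminf_{n→∞} n^{-k/(k+1)} · (1/|L_n^k|) · Σ_{A ∈ L_n^k} H(A) ≥ k^{k/(k+1)}/(k+1). (In particular this liminf is at least 1 − (ln k + 1)/(k+1).) -/

import Mathlib

open scoped Classical

/-- `A : [n]^{k+1} → {0,1}` is an order-`n` `k`-dimensional permutation if every
line (obtained by fixing all coordinates but one) contains exactly one `1`. -/
def IsHDPerm (n k : ℕ) (A : (Fin (k + 1) → Fin n) → Bool) : Prop :=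
  ∀ (j : Fin (k + 1)) (x : Fin (k + 1) → Fin n),
    ∃! t : Fin n, A (Function.update x j t) = true

/-- `L_n^k`: the finite set of order-`n` `k`-dimensional permutations. -/
noncomputable def HDPerms (n k : ℕ) : Finset ((Fin (k + 1) → Fin n) → Bool) :=
  Finset.univ.filter (fun A => IsHDPerm n k A)

/-- A monotone subsequence of length `m` in `A`: a sequence of `m` support
positions that is strictly monotone (in some direction) in every coordinate. -/
def IsMonoSub (n k m : ℕ) (A : (Fin (k + 1) → Fin n) → Bool)
    (α : Fin m → (Fin (k + 1) → Fin n)) : Prop :=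
  (∀ i, A (α i) = true) ∧
    ∀ j : Fin (k + 1), StrictMono (fun i => α i j) ∨ StrictAnti (fun i => α i j)

/-- `H(A)`: the maximum length of a monotone subsequence of `A`. -/
noncomputable def HLen (n k : ℕ) (A : (Fin (k + 1) → Fin n) → Bool) : ℕ :=
  sSup {m : ℕ | ∃ α : Fin m → (Fin (k + 1) → Fin n), IsMonoSub n k m A α}

/-- The strict partial order `<_c` on `[n]^{k+1}` induced by `c ∈ {0,1}^{k+1}`. -/
def cLT {n k : ℕ} (c : Fin (k + 1) → Bool) (x y : Fin (k + 1) → Fin n) : Prop :=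
  ∀ i, if c i then x i < y i else y i < x i

/-- A `<_c`-monotone subsequence of length `m` in `A`: a `<_c`-chain of `m`
support positions. -/
def IsCMonoSub (n k m : ℕ) (c : Fin (k + 1) → Bool)
    (A : (Fin (k + 1) → Fin n) → Bool) (α : Fin m → (Fin (k + 1) → Fin n)) : Prop :=
  (∀ i, A (α i) = true) ∧ ∀ i j : Fin m, i < j → cLT c (α i) (α j)

/-!
Lower bound: cut the diagonal of `[n]^{k+1}` into `⌊n/s⌋` disjoint cubes of side `s`. One support
point from each cube that meets the support gives an increasing sequence, so `H(A)` is at least the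
number of such cubes. Relabelling the values of one coordinate preserves the uniform distribution
on `L_n^k`, hence a position lies in the support with probability `1/n`, and two positions lie in
it together with probability at most `1/(n(n-1))`. By the second moment method a cube with
`q = s^{k+1}` positions meets the support with probability at least `(q/n) / (1 + q/(n-1))`, which
tends to `k/(k+1)` when `s ~ (kn)^{1/(k+1)}`.

Upper bound: a real `liminf` is a junk value unless the sequence is frequently bounded above, so
the mean of `H` must also be shown to be `O(n^{k/(k+1)})`. The expected number of monotone
subsequences of length `m` is at most `2^{k+1} C(n,m)^k / m!`, which is at most `2^{k+1}` once
`m ≥ e n^{k/(k+1)}`.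
-/

section
open Filter Finset Topology
open scoped Nat

section SecondMoment

variable {α β : Type*} (s : Finset α) (t : Finset β) (r : α → β → Prop)
  [∀ a b, Decidable (r a b)]

theorem sq_sum_card_filter_le :
    (∑ a ∈ s, #{b ∈ t | r a b}) ^ 2 ≤
      #{a ∈ s | ∃ b ∈ t, r a b} * ∑ a ∈ s, #{b ∈ t | r a b} ^ 2 := by
  have sum_hit : ∑ a ∈ s with ∃ b ∈ t, r a b, #{b ∈ t | r a b} = ∑ a ∈ s, #{b ∈ t | r a b} :=
    sum_filter_of_ne fun a _ h => by simpa [filter_eq_empty_iff] using h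
  calc (∑ a ∈ s, #{b ∈ t | r a b}) ^ 2
      ≤ #{a ∈ s | ∃ b ∈ t, r a b} * ∑ a ∈ s with ∃ b ∈ t, r a b, #{b ∈ t | r a b} ^ 2 :=
        sum_hit ▸ sq_sum_le_card_mul_sum_sq
    _ ≤ _ := by gcongr; exact filter_subset _ _

theorem sum_card_filter_sq :
    ∑ a ∈ s, #{b ∈ t | r a b} ^ 2 =
      ∑ b ∈ t, #{a ∈ s | r a b} + ∑ p ∈ t.offDiag, #{a ∈ s | r a p.1 ∧ r a p.2} := by
  calc ∑ a ∈ s, #{b ∈ t | r a b} ^ 2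
      = ∑ a ∈ s, #{p ∈ t ×ˢ t | r a p.1 ∧ r a p.2} :=
        sum_congr rfl fun a _ => by rw [sq, ← card_product, filter_product]
    _ = ∑ p ∈ t ×ˢ t, #{a ∈ s | r a p.1 ∧ r a p.2} :=
        sum_card_bipartiteAbove_eq_sum_card_bipartiteBelow
          fun a (p : β × β) => r a p.1 ∧ r a p.2
    _ = _ := by
        rw [← diag_union_offDiag, sum_union (disjoint_diag_offDiag _), sum_diag]
        simp only [and_self]

variable {s t r}

theorem sum_card_filter_sq_le {p q : ℝ} (hq : 0 ≤ q)
    (card_one : ∀ b ∈ t, (#{a ∈ s | r a b} : ℝ) = p * #s)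
    (card_two : ∀ b ∈ t, ∀ c ∈ t, b ≠ c → (#{a ∈ s | r a b ∧ r a c} : ℝ) ≤ q * #s) :
    (∑ a ∈ s, #{b ∈ t | r a b} ^ 2 : ℝ) ≤ #t * (p * #s) + #t ^ 2 * (q * #s) := by
  have card_offDiag : (#t.offDiag : ℝ) ≤ #t ^ 2 := by
    rw [offDiag_card, sq]
    exact mod_cast Nat.sub_le _ _
  have diagonal : (∑ b ∈ t, #{a ∈ s | r a b} : ℝ) = #t * (p * #s) := by
    rw [sum_congr rfl card_one, sum_const, nsmul_eq_mul]
  have off_diagonal : (∑ c ∈ t.offDiag, #{a ∈ s | r a c.1 ∧ r a c.2} : ℝ) ≤ #t ^ 2 * (q * #s) :=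
    calc (∑ c ∈ t.offDiag, #{a ∈ s | r a c.1 ∧ r a c.2} : ℝ)
        ≤ #t.offDiag • (q * #s) := sum_le_card_nsmul _ _ _ fun c hc => by
          obtain ⟨hb, hc, hbc⟩ := mem_offDiag.1 hc
          exact card_two _ hb _ hc hbc
      _ ≤ #t ^ 2 * (q * #s) := by rw [nsmul_eq_mul]; gcongr
  calc (∑ a ∈ s, #{b ∈ t | r a b} ^ 2 : ℝ)
      = (∑ b ∈ t, #{a ∈ s | r a b} : ℝ) + (∑ c ∈ t.offDiag, #{a ∈ s | r a c.1 ∧ r a c.2} : ℝ) :=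
        mod_cast sum_card_filter_sq s t r
    _ ≤ _ := add_le_add diagonal.le off_diagonal

theorem mul_card_le_mul_card_filter_exists {p q : ℝ} (hq : 0 ≤ q)
    (card_one : ∀ b ∈ t, (#{a ∈ s | r a b} : ℝ) = p * #s)
    (card_two : ∀ b ∈ t, ∀ c ∈ t, b ≠ c → (#{a ∈ s | r a b ∧ r a c} : ℝ) ≤ q * #s) :
    (#t * p ^ 2) * #s ≤ (p + #t * q) * #{a ∈ s | ∃ b ∈ t, r a b} := by
  rcases t.eq_empty_or_nonempty with rfl | ht
  · simp
  rcases s.eq_empty_or_nonempty with rfl | hs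
  · simp
  have first_moment : (∑ a ∈ s, #{b ∈ t | r a b} : ℝ) = #t * (p * #s) := by
    calc (∑ a ∈ s, #{b ∈ t | r a b} : ℝ) = (∑ b ∈ t, #{a ∈ s | r a b} : ℝ) :=
          mod_cast sum_card_bipartiteAbove_eq_sum_card_bipartiteBelow r (s := s) (t := t)
      _ = #t * (p * #s) := by rw [sum_congr rfl card_one, sum_const, nsmul_eq_mul]
  have cauchy_schwarz : (#t * (p * #s)) ^ 2 ≤
      #{a ∈ s | ∃ b ∈ t, r a b} * (#t * (p * #s) + #t ^ 2 * (q * #s)) :=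
    calc (#t * (p * #s)) ^ 2
        ≤ #{a ∈ s | ∃ b ∈ t, r a b} * (∑ a ∈ s, #{b ∈ t | r a b} ^ 2 : ℝ) := by
          rw [← first_moment]
          exact mod_cast sq_sum_card_filter_le s t r
      _ ≤ _ := by gcongr; exact sum_card_filter_sq_le hq card_one card_two
  have card_mul_card_pos : (0 : ℝ) < #t * #s := mod_cast Nat.mul_pos ht.card_pos hs.card_pos
  refine le_of_mul_le_mul_left ?_ card_mul_card_pos
  linear_combination cauchy_schwarz

end SecondMoment

section MonotoneTuples

variable {α : Type*} [LinearOrder α] [Fintype α]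

theorem card_filter_strictMono (m : ℕ) :
    #{f : Fin m → α | StrictMono f} = (Fintype.card α).choose m := by
  let strictMonoEquiv : (Fin m ↪o α) ≃ {f : Fin m → α // StrictMono f} :=
    { toFun := fun f => ⟨f, f.strictMono⟩
      invFun := fun f => OrderEmbedding.ofStrictMono f.1 f.2 }
  rw [← Fintype.card_subtype, ← Nat.card_eq_fintype_card,
    ← Nat.card_congr strictMonoEquiv, Nat.card_congr Set.powersetCard.ofFinEmbEquiv,
    Set.powersetCard.card, Nat.card_eq_fintype_card]

theorem card_filter_strictAnti (m : ℕ) :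
    #{f : Fin m → α | StrictAnti f} = (Fintype.card α).choose m :=
  card_filter_strictMono (α := αᵒᵈ) m

/-- Sequences of `m` points of `α ^ (k + 1)` that are strictly monotone, in some direction, in each
coordinate: the candidates for monotone subsequences. -/
noncomputable def monoTuples (α : Type*) [LinearOrder α] [Fintype α] (k m : ℕ) :
    Finset (Fin m → Fin (k + 1) → α) :=
  {f | ∀ j, StrictMono (fun i => f i j) ∨ StrictAnti (fun i => f i j)}

theorem card_monoTuples_le (k m : ℕ) :
    #(monoTuples α k m) ≤ (2 * (Fintype.card α).choose m) ^ (k + 1) := by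
  have card_monotone :
      #{f : Fin m → α | StrictMono f ∨ StrictAnti f} ≤ 2 * (Fintype.card α).choose m := by
    rw [filter_or, two_mul]
    exact (card_union_le _ _).trans
      (add_le_add (card_filter_strictMono m).le (card_filter_strictAnti m).le)
  calc #(monoTuples α k m)
      ≤ #(Fintype.piFinset fun _ : Fin (k + 1) =>
          ({f | StrictMono f ∨ StrictAnti f} : Finset (Fin m → α))) :=
        card_le_card_of_injOn Function.swap (fun f hf => by simpa [monoTuples] using hf)
          Function.swap_bijective.injective.injOn
    _ ≤ _ := by
        rw [Fintype.card_piFinset_const]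
        exact Nat.pow_le_pow_left card_monotone _

end MonotoneTuples

section Permutations

variable {n k m : ℕ} {A : (Fin (k + 1) → Fin n) → Bool}

theorem IsHDPerm.comp_piMap (hA : IsHDPerm n k A) (σ : Fin (k + 1) → Equiv.Perm (Fin n)) :
    IsHDPerm n k (A ∘ Pi.map fun j => σ j) := by
  intro j x
  simp only [Function.comp_apply, Pi.map_update]
  exact (σ j).bijective.existsUnique_iff.1 (hA j _)

theorem HDPerms.mem_iff : A ∈ HDPerms n k ↔ IsHDPerm n k A := by
  simp [HDPerms]

theorem HDPerms.nonempty (n k : ℕ) [NeZero n] : (HDPerms n k).Nonempty := by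
  refine ⟨fun x => decide (∑ i, x i = 0), HDPerms.mem_iff.2 fun j x => ?_⟩
  simp only [decide_eq_true_eq, sum_update_of_mem (mem_univ j), add_eq_zero_iff_eq_neg]
  exact existsUnique_eq

/-- The number of order-`n` `k`-dimensional permutations whose support contains every `f i`. -/
noncomputable def throughCount (f : Fin m → Fin (k + 1) → Fin n) : ℕ :=
  #{A ∈ HDPerms n k | ∀ i, A (f i) = true}

theorem throughCount_le_throughCount_piMap (σ : Fin (k + 1) → Equiv.Perm (Fin n))
    (f : Fin m → Fin (k + 1) → Fin n) :
    throughCount (Pi.map (fun j => σ j) ∘ f) ≤ throughCount f := by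
  have surjective_piMap : (Pi.map fun j => σ j : (Fin (k + 1) → Fin n) → _).Surjective :=
    Function.Surjective.piMap fun j => (σ j).surjective
  refine card_le_card_of_injOn (· ∘ Pi.map fun j => σ j) (fun A hA => ?_)
    surjective_piMap.injective_comp_right.injOn
  simp only [coe_filter, HDPerms.mem_iff, Set.mem_ofPred_eq] at hA ⊢
  exact ⟨hA.1.comp_piMap σ, hA.2⟩

theorem throughCount_piMap (σ : Fin (k + 1) → Equiv.Perm (Fin n))
    (f : Fin m → Fin (k + 1) → Fin n) :
    throughCount (Pi.map (fun j => σ j) ∘ f) = throughCount f := by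
  refine (throughCount_le_throughCount_piMap σ f).antisymm ?_
  simpa [← Function.comp_assoc, Pi.map_comp_map] using
    throughCount_le_throughCount_piMap σ⁻¹ (Pi.map (fun j => σ j) ∘ f)

theorem throughCount_update {f : Fin m → Fin (k + 1) → Fin n} {j : Fin (k + 1)}
    (hf : Function.Injective fun i => f i j) {g : Fin m → Fin n} (hg : g.Injective) :
    throughCount (fun i => Function.update (f i) j (g i)) = throughCount f := by
  have := Equiv.Perm.isMultiplyPretransitive (Fin n) m
  obtain ⟨σ, hσ⟩ := MulAction.exists_smul_eq (Equiv.Perm (Fin n))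
    (⟨_, hf⟩ : Fin m ↪ Fin n) ⟨g, hg⟩
  rw [← throughCount_piMap (Pi.mulSingle j σ) f]
  congr 1 with i l
  rcases eq_or_ne l j with rfl | hl
  · simpa using congrArg Fin.val (DFunLike.congr_fun hσ i).symm
  · simp [hl]

theorem throughCount_mul_descFactorial_le {f : Fin m → Fin (k + 1) → Fin n} {j : Fin (k + 1)}
    (hf : Function.Injective fun i => f i j) :
    throughCount f * n.descFactorial m ≤ #(HDPerms n k) := by
  have double_count := card_mul_le_card_mul (s := (univ : Finset (Fin m ↪ Fin n)))
    (t := HDPerms n k) (m := throughCount f) (n := 1)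
    (fun (g : Fin m ↪ Fin n) (A : (Fin (k + 1) → Fin n) → Bool) =>
      ∀ i : Fin m, A (Function.update (f i) j (g i)) = true)
    (fun g _ => (throughCount_update hf g.injective).ge) fun A hA => ?_
  · simpa [Fintype.card_embedding_eq, mul_comm] using double_count
  · refine card_le_one.2 fun g hg h hh => DFunLike.ext _ _ fun i => ?_
    simp only [mem_bipartiteBelow, mem_univ, true_and] at hg hh
    exact (HDPerms.mem_iff.1 hA j (f i)).unique (hg i) (hh i)

theorem HDPerms.card_filter_apply_mul (x : Fin (k + 1) → Fin n) :
    #{A ∈ HDPerms n k | A x = true} * n = #(HDPerms n k) := by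
  have card_update (t : Fin n) : #{A ∈ HDPerms n k | A (Function.update x 0 t) = true} =
      #{A ∈ HDPerms n k | A x = true} := by
    simpa [throughCount] using throughCount_update (f := fun _ : Fin 1 => x) (j := 0)
      (Function.injective_of_subsingleton _) (Function.injective_of_subsingleton fun _ => t)
  have card_line (A) (hA : A ∈ HDPerms n k) : #{t | A (Function.update x 0 t) = true} = 1 :=
    (Fintype.existsUnique_iff_card_one _).1 (HDPerms.mem_iff.1 hA 0 x)
  have double_count := card_mul_eq_card_mul (s := univ)
    (fun (t : Fin n) (A : (Fin (k + 1) → Fin n) → Bool) => A (Function.update x 0 t) = true)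
    (fun t _ => card_update t) card_line
  simpa [mul_comm] using double_count

theorem HDPerms.card_filter_apply_and_apply_mul_le {x y : Fin (k + 1) → Fin n} (hxy : x ≠ y) :
    #{A ∈ HDPerms n k | A x = true ∧ A y = true} * (n * (n - 1)) ≤ #(HDPerms n k) := by
  obtain ⟨j, hj⟩ := Function.ne_iff.1 hxy
  have injective_pair : Function.Injective fun i => ![x, y] i j := by
    intro a b hab
    fin_cases a <;> fin_cases b <;> simp_all
  simpa [throughCount, Fin.forall_fin_two, Nat.descFactorial, mul_comm] using
    throughCount_mul_descFactorial_le injective_pair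

theorem HDPerms.card_mul_le_card_filter_exists (hn : 2 ≤ n) (S : Finset (Fin (k + 1) → Fin n)) :
    (#S / n / (1 + #S / (n - 1)) : ℝ) * #(HDPerms n k) ≤
      #{A ∈ HDPerms n k | ∃ x ∈ S, A x = true} := by
  have hn0 : (0 : ℝ) < n := by positivity
  have hn1 : (0 : ℝ) < n - 1 := sub_pos.2 (mod_cast hn)
  have card_one (x : Fin (k + 1) → Fin n) :
      (#{A ∈ HDPerms n k | A x = true} : ℝ) = 1 / n * #(HDPerms n k) := by
    rw [one_div_mul_eq_div, eq_div_iff hn0.ne']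
    exact mod_cast HDPerms.card_filter_apply_mul x
  have card_two {x y : Fin (k + 1) → Fin n} (hxy : x ≠ y) :
      (#{A ∈ HDPerms n k | A x = true ∧ A y = true} : ℝ) ≤
        1 / (n * (n - 1)) * #(HDPerms n k) := by
    rw [one_div_mul_eq_div, le_div_iff₀ (mul_pos hn0 hn1), ← Nat.cast_pred (by lia)]
    exact mod_cast HDPerms.card_filter_apply_and_apply_mul_le hxy
  have second_moment : #S * (1 / n : ℝ) ^ 2 * #(HDPerms n k) ≤
      (1 / n + #S * (1 / (n * (n - 1)))) * #{A ∈ HDPerms n k | ∃ x ∈ S, A x = true} := by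
    convert mul_card_le_mul_card_filter_exists (s := HDPerms n k) (r := fun A x => A x = true)
      (by positivity) (fun x _ => card_one x) (fun x (_ : x ∈ S) y _ hxy => card_two hxy)
  rw [div_mul_eq_mul_div, div_le_iff₀ (by positivity)]
  refine le_of_mul_le_mul_left ?_ (one_div_pos.2 hn0)
  calc 1 / n * (#S / n * #(HDPerms n k)) = #S * (1 / n : ℝ) ^ 2 * #(HDPerms n k) := by ring
    _ ≤ _ := second_moment
    _ = _ := by field

end Permutations

section Length

variable {n k m : ℕ} {A : (Fin (k + 1) → Fin n) → Bool}

theorem IsMonoSub.le {α : Fin m → Fin (k + 1) → Fin n} (hα : IsMonoSub n k m A α) : m ≤ n := by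
  have injective_zero : Function.Injective fun i => α i 0 :=
    (hα.2 0).elim StrictMono.injective StrictAnti.injective
  simpa using Fintype.card_le_of_injective _ injective_zero

theorem IsMonoSub.comp {l : ℕ} {α : Fin m → Fin (k + 1) → Fin n} (hα : IsMonoSub n k m A α)
    {w : Fin l → Fin m} (hw : StrictMono w) : IsMonoSub n k l A (α ∘ w) :=
  ⟨fun i => hα.1 (w i), fun j => (hα.2 j).imp (·.comp hw) (·.comp_strictMono hw)⟩

theorem bddAbove_isMonoSub (A : (Fin (k + 1) → Fin n) → Bool) :
    BddAbove {m | ∃ α, IsMonoSub n k m A α} :=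
  ⟨n, fun _ ⟨_, hα⟩ => hα.le⟩

theorem exists_isMonoSub_HLen (A : (Fin (k + 1) → Fin n) → Bool) :
    ∃ α, IsMonoSub n k (HLen n k A) A α :=
  Nat.sSup_mem (s := {m | ∃ α, IsMonoSub n k m A α})
    ⟨0, Fin.elim0, fun i => i.elim0, fun _ => Or.inl (Subsingleton.strictMono _)⟩
    (bddAbove_isMonoSub A)

theorem card_le_HLen {ι : Type*} [LinearOrder ι] [Fintype ι] {x : ι → Fin (k + 1) → Fin n}
    (support : ∀ b, A (x b) = true) (strictMono : ∀ j, StrictMono fun b => x b j) :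
    Fintype.card ι ≤ HLen n k A :=
  le_csSup (bddAbove_isMonoSub A) ⟨x ∘ Fintype.orderIsoFinOfCardEq ι rfl, fun _ => support _,
    fun j => Or.inl ((strictMono j).comp (OrderIso.strictMono _))⟩

-- The windows of `m + 1` consecutive terms of a longest monotone subsequence are distinct.
theorem HLen_le_add_card_isMonoSub (A : (Fin (k + 1) → Fin n) → Bool) (m : ℕ) :
    HLen n k A ≤ m + #{α | IsMonoSub n k (m + 1) A α} := by
  obtain ⟨α, hα⟩ := exists_isMonoSub_HLen A
  generalize HLen n k A = h at α hα
  let window (i : Fin (h - m)) (t : Fin (m + 1)) : Fin h := ⟨i + t, by lia⟩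
  have window_strictMono (i) : StrictMono (window i) := fun _ _ hab =>
    Nat.add_lt_add_left hab _
  have injective_alpha : Function.Injective α := fun a b hab =>
    (hα.2 0).elim StrictMono.injective StrictAnti.injective (congrFun hab 0)
  have injective_window : Function.Injective fun i => α ∘ window i := fun i i' hii' => by
    simpa [window, Fin.ext_iff] using injective_alpha (congrFun hii' 0)
  have card_windows := card_le_card_of_injOn (s := univ)
    (t := {β | IsMonoSub n k (m + 1) A β}) (fun i => α ∘ window i)
    (fun i _ => by simpa using hα.comp (window_strictMono i)) injective_window.injOn
  rw [card_fin] at card_windows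
  lia

end Length

section Blocks

variable {n k s b : ℕ}

/-- The `b`-th diagonal cube of side `s` in `[n]^{k+1}`, that is, `[bs, (b+1)s)^{k+1}` with
coordinates counted from `0`. -/
noncomputable def diagBlock (n k s b : ℕ) : Finset (Fin (k + 1) → Fin n) :=
  Fintype.piFinset fun _ => {t : Fin n | (t : ℕ) ∈ Ico (b * s) ((b + 1) * s)}

theorem card_diagBlock (h : (b + 1) * s ≤ n) : #(diagBlock n k s b) = s ^ (k + 1) := by
  have lt_of_mem : ∀ t ∈ Ico (b * s) ((b + 1) * s), t < n := fun t ht =>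
    (mem_Ico.1 ht).2.trans_le h
  have filter_eq_attachFin :
      ({t : Fin n | (t : ℕ) ∈ Ico (b * s) ((b + 1) * s)} : Finset (Fin n)) =
        attachFin _ lt_of_mem := by
    ext t
    simp
  rw [diagBlock, Fintype.card_piFinset_const, filter_eq_attachFin, card_attachFin, Nat.card_Ico,
    ← Nat.sub_mul, Nat.add_sub_cancel_left, one_mul]

theorem apply_lt_apply_of_mem_diagBlock {b' : ℕ} {x y : Fin (k + 1) → Fin n} (hb : b < b')
    (hx : x ∈ diagBlock n k s b) (hy : y ∈ diagBlock n k s b') (j : Fin (k + 1)) : x j < y j := by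
  simp only [diagBlock, Fintype.mem_piFinset, mem_filter, mem_univ, true_and, mem_Ico] at hx hy
  exact (hx j).2.trans_le ((Nat.mul_le_mul_right s hb).trans (hy j).1)

theorem card_hit_diagBlocks_le_HLen (A : (Fin (k + 1) → Fin n) → Bool) (s M : ℕ) :
    #{b ∈ range M | ∃ x ∈ diagBlock n k s b, A x = true} ≤ HLen n k A := by
  have exists_point (b : ({b ∈ range M | ∃ x ∈ diagBlock n k s b, A x = true} : Finset ℕ)) :=
    (mem_filter.1 b.2).2
  choose x hx support using exists_point
  rw [← Fintype.card_coe]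
  exact card_le_HLen support fun j b b' hbb' =>
    apply_lt_apply_of_mem_diagBlock hbb' (hx b) (hx b') j

end Blocks

section Mean

/-- The average of `H(A)` over `A ∈ L_n^k`. -/
noncomputable def meanHLen (n k : ℕ) : ℝ :=
  (∑ A ∈ HDPerms n k, (HLen n k A : ℝ)) / #(HDPerms n k)

variable {n k m : ℕ}

theorem mul_le_meanHLen (hn : 2 ≤ n) {s M : ℕ} (hM : M * s ≤ n) :
    (M * ((s : ℝ) ^ (k + 1) / n / (1 + (s : ℝ) ^ (k + 1) / (n - 1))) : ℝ) ≤ meanHLen n k := by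
  have : NeZero n := ⟨by lia⟩
  set hitBound : ℝ := (s : ℝ) ^ (k + 1) / n / (1 + (s : ℝ) ^ (k + 1) / (n - 1))
  have card_hit (b) (hb : b ∈ range M) : hitBound * #(HDPerms n k) ≤
      #{A ∈ HDPerms n k | ∃ x ∈ diagBlock n k s b, A x = true} := by
    have block_le : (b + 1) * s ≤ n := (Nat.mul_le_mul_right s (mem_range.1 hb)).trans hM
    simpa [card_diagBlock block_le] using
      HDPerms.card_mul_le_card_filter_exists hn (diagBlock n k s b)
  rw [meanHLen, le_div_iff₀ (mod_cast (HDPerms.nonempty n k).card_pos)]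
  calc M * hitBound * #(HDPerms n k)
      = ∑ _b ∈ range M, hitBound * #(HDPerms n k) := by simp [mul_assoc]
    _ ≤ ∑ b ∈ range M, (#{A ∈ HDPerms n k | ∃ x ∈ diagBlock n k s b, A x = true} : ℝ) :=
        sum_le_sum card_hit
    _ = ∑ A ∈ HDPerms n k, (#{b ∈ range M | ∃ x ∈ diagBlock n k s b, A x = true} : ℝ) :=
        mod_cast (sum_card_bipartiteAbove_eq_sum_card_bipartiteBelow
          fun b (A : (Fin (k + 1) → Fin n) → Bool) => ∃ x ∈ diagBlock n k s b, A x = true)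
    _ ≤ ∑ A ∈ HDPerms n k, (HLen n k A : ℝ) :=
        sum_le_sum fun A _ => mod_cast card_hit_diagBlocks_le_HLen A s M

theorem sum_card_isMonoSub (n k m : ℕ) :
    ∑ A ∈ HDPerms n k, #{α | IsMonoSub n k m A α} =
      ∑ α ∈ monoTuples (Fin n) k m, throughCount α := by
  have filter_isMonoSub (A : (Fin (k + 1) → Fin n) → Bool) :
      ({α | IsMonoSub n k m A α} : Finset (Fin m → Fin (k + 1) → Fin n)) =
        {α ∈ monoTuples (Fin n) k m | ∀ i, A (α i) = true} := by
    ext α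
    rw [mem_filter, mem_filter, monoTuples, mem_filter]
    simp [IsMonoSub, and_comm]
  simp only [filter_isMonoSub]
  exact sum_card_bipartiteAbove_eq_sum_card_bipartiteBelow
    fun (A : (Fin (k + 1) → Fin n) → Bool) (α : Fin m → Fin (k + 1) → Fin n) =>
      ∀ i, A (α i) = true

theorem sum_card_isMonoSub_mul_factorial_le (n k m : ℕ) :
    (∑ A ∈ HDPerms n k, #{α | IsMonoSub n k m A α}) * m ! ≤
      2 ^ (k + 1) * n.choose m ^ k * #(HDPerms n k) := by
  have card_tuples := card_monoTuples_le (α := Fin n) k m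
  rw [Fintype.card_fin] at card_tuples
  have through_le (α) (hα : α ∈ monoTuples (Fin n) k m) :
      throughCount α * (m ! * n.choose m) ≤ #(HDPerms n k) := by
    rw [← Nat.descFactorial_eq_factorial_mul_choose]
    exact throughCount_mul_descFactorial_le (j := 0)
      (((mem_filter.1 hα).2 0).elim StrictMono.injective StrictAnti.injective)
  rw [sum_card_isMonoSub]
  rcases Nat.eq_zero_or_pos (n.choose m) with choose_eq_zero | choose_pos
  · have tuples_empty : monoTuples (Fin n) k m = ∅ := by
      simpa [choose_eq_zero] using card_tuples
    simp [tuples_empty]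
  refine Nat.le_of_mul_le_mul_right ?_ choose_pos
  calc (∑ α ∈ monoTuples (Fin n) k m, throughCount α) * m ! * n.choose m
      = ∑ α ∈ monoTuples (Fin n) k m, throughCount α * (m ! * n.choose m) := by
        rw [mul_assoc, sum_mul]
    _ ≤ #(monoTuples (Fin n) k m) * #(HDPerms n k) := sum_le_card_nsmul _ _ _ through_le
    _ ≤ (2 * n.choose m) ^ (k + 1) * #(HDPerms n k) := Nat.mul_le_mul_right _ card_tuples
    _ = 2 ^ (k + 1) * n.choose m ^ k * #(HDPerms n k) * n.choose m := by ring

theorem sum_card_isMonoSub_le (hm : (n ^ m) ^ k ≤ m ! ^ (k + 1)) :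
    ∑ A ∈ HDPerms n k, #{α | IsMonoSub n k m A α} ≤ 2 ^ (k + 1) * #(HDPerms n k) := by
  have factorial_mul_choose_le : m ! * n.choose m ≤ n ^ m := by
    rw [← Nat.descFactorial_eq_factorial_mul_choose]
    exact Nat.descFactorial_le_pow n m
  refine Nat.le_of_mul_le_mul_right ?_ (pow_pos m.factorial_pos (k + 1))
  calc (∑ A ∈ HDPerms n k, #{α | IsMonoSub n k m A α}) * m ! ^ (k + 1)
      = (∑ A ∈ HDPerms n k, #{α | IsMonoSub n k m A α}) * m ! * m ! ^ k := by ring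
    _ ≤ 2 ^ (k + 1) * n.choose m ^ k * #(HDPerms n k) * m ! ^ k :=
        Nat.mul_le_mul_right _ (sum_card_isMonoSub_mul_factorial_le n k m)
    _ = 2 ^ (k + 1) * #(HDPerms n k) * (m ! * n.choose m) ^ k := by ring
    _ ≤ 2 ^ (k + 1) * #(HDPerms n k) * m ! ^ (k + 1) :=
        Nat.mul_le_mul_left _ ((Nat.pow_le_pow_left factorial_mul_choose_le k).trans hm)

theorem meanHLen_le_add (hm : (n ^ (m + 1)) ^ k ≤ (m + 1)! ^ (k + 1)) :
    meanHLen n k ≤ m + 2 ^ (k + 1) := by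
  refine div_le_of_le_mul₀ (by positivity) (by positivity) ?_
  have sum_le : ∑ A ∈ HDPerms n k, HLen n k A ≤ (m + 2 ^ (k + 1)) * #(HDPerms n k) :=
    calc ∑ A ∈ HDPerms n k, HLen n k A
        ≤ ∑ A ∈ HDPerms n k, (m + #{α | IsMonoSub n k (m + 1) A α}) :=
          sum_le_sum fun A _ => HLen_le_add_card_isMonoSub A m
      _ = m * #(HDPerms n k) + ∑ A ∈ HDPerms n k, #{α | IsMonoSub n k (m + 1) A α} := by
          rw [sum_add_distrib, sum_const, smul_eq_mul, mul_comm]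
      _ ≤ m * #(HDPerms n k) + 2 ^ (k + 1) * #(HDPerms n k) :=
          Nat.add_le_add_left (sum_card_isMonoSub_le hm) _
      _ = (m + 2 ^ (k + 1)) * #(HDPerms n k) := by ring
  exact mod_cast sum_le

theorem pow_le_factorial_of_exp_one_mul_le {y : ℝ} (hy : 0 ≤ y) (hm : Real.exp 1 * y ≤ m) :
    y ^ m ≤ m ! := by
  refine le_of_mul_le_mul_left ?_ (Real.exp_pos m)
  calc Real.exp m * y ^ m = (Real.exp 1 * y) ^ m := by rw [mul_pow, Real.exp_one_pow]
    _ ≤ (m : ℝ) ^ m := by gcongr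
    _ ≤ Real.exp m * m ! :=
        (div_le_iff₀ (mod_cast m.factorial_pos)).1
          (Real.pow_div_factorial_le_exp _ m.cast_nonneg m)

theorem meanHLen_le (n k : ℕ) :
    meanHLen n k ≤ Real.exp 1 * (n : ℝ) ^ ((k : ℝ) / (k + 1)) + 2 ^ (k + 1) := by
  set y : ℝ := (n : ℝ) ^ ((k : ℝ) / (k + 1))
  have hy : 0 ≤ y := by positivity
  have y_pow : y ^ (k + 1) = (n : ℝ) ^ k := by
    rw [← Real.rpow_mul_natCast n.cast_nonneg, Nat.cast_add_one,
      div_mul_cancel₀ _ (by positivity), Real.rpow_natCast]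
  set m := ⌊Real.exp 1 * y⌋₊
  have factorial_ge : y ^ (m + 1) ≤ (m + 1)! :=
    pow_le_factorial_of_exp_one_mul_le hy (mod_cast (Nat.lt_floor_add_one _).le)
  have hm : ((n : ℝ) ^ (m + 1)) ^ k ≤ (m + 1)! ^ (k + 1) :=
    calc ((n : ℝ) ^ (m + 1)) ^ k = (y ^ (m + 1)) ^ (k + 1) := by
          rw [pow_right_comm, ← y_pow, pow_right_comm]
      _ ≤ (m + 1)! ^ (k + 1) := by gcongr
  exact (meanHLen_le_add (mod_cast hm)).trans (by gcongr; exact Nat.floor_le (by positivity))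

theorem rpow_neg_mul_meanHLen_le (hn : 1 ≤ n) (k : ℕ) :
    (n : ℝ) ^ (-((k : ℝ) / (k + 1))) * meanHLen n k ≤ Real.exp 1 + 2 ^ (k + 1) := by
  set y : ℝ := (n : ℝ) ^ ((k : ℝ) / (k + 1)) with hy
  have one_le_y : 1 ≤ y := Real.one_le_rpow (mod_cast hn) (by positivity)
  rw [Real.rpow_neg n.cast_nonneg, ← hy, inv_mul_le_iff₀ (by positivity)]
  calc meanHLen n k ≤ Real.exp 1 * y + 2 ^ (k + 1) := meanHLen_le n k
    _ ≤ Real.exp 1 * y + y * 2 ^ (k + 1) := by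
        gcongr
        exact le_mul_of_one_le_left (by positivity) one_le_y
    _ = y * (Real.exp 1 + 2 ^ (k + 1)) := by ring

end Mean

section Asymptotics

variable {k : ℕ}

/-- The side of the diagonal blocks, about `(kn)^{1/(k+1)}`. With side `c n^{1/(k+1)}` the
normalised lower bound tends to `c^k / (1 + c^{k+1})`, which is largest at `c^{k+1} = k`. -/
noncomputable def blockSide (k n : ℕ) : ℕ :=
  ⌊((k : ℝ) * n) ^ ((k + 1 : ℕ) : ℝ)⁻¹⌋₊

theorem tendsto_blockSide_div (k : ℕ) :
    Tendsto (fun n : ℕ => (blockSide k n : ℝ) / (n : ℝ) ^ ((k + 1 : ℕ) : ℝ)⁻¹) atTop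
      (𝓝 ((k : ℝ) ^ ((k + 1 : ℕ) : ℝ)⁻¹)) := by
  have root_tendsto : Tendsto (fun n : ℕ => (n : ℝ) ^ ((k + 1 : ℕ) : ℝ)⁻¹) atTop atTop :=
    (tendsto_rpow_atTop (by positivity)).comp tendsto_natCast_atTop_atTop
  refine ((tendsto_nat_floor_mul_div_atTop (by positivity)).comp root_tendsto).congr fun n => ?_
  rw [blockSide, Real.mul_rpow k.cast_nonneg n.cast_nonneg, Function.comp_apply]

theorem tendsto_blockSide_pow_div (k : ℕ) :
    Tendsto (fun n : ℕ => (blockSide k n : ℝ) ^ (k + 1) / n) atTop (𝓝 k) := by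
  have pow_tendsto := (tendsto_blockSide_div k).pow (k + 1)
  simpa only [div_pow, Real.rpow_inv_natCast_pow (Nat.cast_nonneg _) k.succ_ne_zero]
    using pow_tendsto

theorem tendsto_hitBound_blockSide (k : ℕ) :
    Tendsto (fun n : ℕ => (blockSide k n : ℝ) ^ (k + 1) / n /
      (1 + (blockSide k n : ℝ) ^ (k + 1) / (n - 1))) atTop (𝓝 (k / (k + 1))) := by
  have pow_div_pred : Tendsto (fun n : ℕ => (blockSide k n : ℝ) ^ (k + 1) / (n - 1)) atTop
      (𝓝 k) := by
    have ratio := (tendsto_blockSide_pow_div k).mul (tendsto_natCast_div_add_atTop (-1 : ℝ))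
    rw [mul_one] at ratio
    refine ratio.congr' ?_
    filter_upwards [eventually_ne_atTop 0] with n hn
    rw [div_mul_div_cancel₀ (mod_cast hn), sub_eq_add_neg]
  rw [add_comm (k : ℝ)]
  exact (tendsto_blockSide_pow_div k).div (pow_div_pred.const_add 1) (by positivity)

theorem tendsto_rpow_neg_mul_div_blockSide (hk : k ≠ 0) :
    Tendsto (fun n : ℕ => (n : ℝ) ^ (-((k : ℝ) / (k + 1))) * (n / blockSide k n : ℕ)) atTop
      (𝓝 ((k : ℝ) ^ ((k + 1 : ℕ) : ℝ)⁻¹)⁻¹) := by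
  have scale_tendsto : Tendsto (fun n : ℕ => (n : ℝ) ^ (-((k : ℝ) / (k + 1)))) atTop (𝓝 0) :=
    (tendsto_rpow_neg_atTop (by positivity)).comp tendsto_natCast_atTop_atTop
  have ratio_tendsto : Tendsto
      (fun n : ℕ => (n : ℝ) ^ (-((k : ℝ) / (k + 1))) * (n / blockSide k n : ℝ)) atTop
      (𝓝 ((k : ℝ) ^ ((k + 1 : ℕ) : ℝ)⁻¹)⁻¹) := by
    refine ((tendsto_blockSide_div k).inv₀ (by positivity)).congr' ?_
    filter_upwards [eventually_gt_atTop 0] with n hn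
    have hn0 : (0 : ℝ) < n := mod_cast hn
    have exponent : (((k + 1 : ℕ) : ℝ)⁻¹) = -((k : ℝ) / (k + 1)) + 1 := by
      push_cast
      field_simp
      ring
    rw [inv_div, exponent, Real.rpow_add_one hn0.ne', mul_div_assoc]
  have lower_tendsto := ratio_tendsto.sub scale_tendsto
  rw [sub_zero] at lower_tendsto
  refine tendsto_of_tendsto_of_tendsto_of_le_of_le lower_tendsto ratio_tendsto
    (fun n => ?_) fun n => ?_
  · have floor_gt := Nat.sub_one_lt_floor ((n : ℝ) / blockSide k n)
    rw [Nat.floor_div_eq_div] at floor_gt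
    rw [← mul_sub_one]
    gcongr
  · dsimp only
    gcongr
    exact Nat.cast_div_le

theorem tendsto_rpow_neg_mul_blockBound (hk : k ≠ 0) :
    Tendsto (fun n : ℕ => (n : ℝ) ^ (-((k : ℝ) / (k + 1))) * ((n / blockSide k n : ℕ) *
      ((blockSide k n : ℝ) ^ (k + 1) / n / (1 + (blockSide k n : ℝ) ^ (k + 1) / (n - 1)))))
      atTop (𝓝 ((k : ℝ) ^ ((k : ℝ) / (k + 1)) / (k + 1))) := by
  have limit_eq : ((k : ℝ) ^ ((k + 1 : ℕ) : ℝ)⁻¹)⁻¹ * (k / (k + 1)) =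
      (k : ℝ) ^ ((k : ℝ) / (k + 1)) / (k + 1) := by
    have exponent : (k : ℝ) / (k + 1) = -((k + 1 : ℕ) : ℝ)⁻¹ + 1 := by
      push_cast
      field_simp
      ring
    rw [← mul_div_assoc, exponent, Real.rpow_add_one (mod_cast hk), Real.rpow_neg k.cast_nonneg]
  simpa only [← limit_eq, mul_assoc] using
    (tendsto_rpow_neg_mul_div_blockSide hk).mul (tendsto_hitBound_blockSide k)

end Asymptotics

end

/-- `liminf_{n → ∞} n^{-k/(k+1)} E[H_n^k] ≥ k^{k/(k+1)} / (k+1)`. -/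
theorem expectation_lower (k : ℕ) (hk : 1 ≤ k) :
    (k : ℝ) ^ ((k : ℝ) / ((k : ℝ) + 1)) / ((k : ℝ) + 1) ≤
      Filter.liminf (fun n : ℕ =>
        (n : ℝ) ^ (-((k : ℝ) / ((k : ℝ) + 1))) *
          ((∑ A ∈ HDPerms n k, (HLen n k A : ℝ)) / ((HDPerms n k).card : ℝ)))
        Filter.atTop := by
  have lower_tendsto := tendsto_rpow_neg_mul_blockBound (Nat.one_le_iff_ne_zero.1 hk)
  rw [← lower_tendsto.liminf_eq]
  refine Filter.liminf_le_liminf ?_ lower_tendsto.isBoundedUnder_ge ?_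
  · filter_upwards [Filter.eventually_ge_atTop 2] with n hn
    gcongr
    exact mul_le_meanHLen hn (Nat.div_mul_le_self n _)
  · refine (Filter.isBoundedUnder_of_eventually_le
      (a := Real.exp 1 + 2 ^ (k + 1)) ?_).isCoboundedUnder_ge
    filter_upwards [Filter.eventually_ge_atTop 1] with n hn
    exact rpow_neg_mul_meanHLen_le hn k
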